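/- arXiv:math/9509223 — 3 statements merged into one kernel-verified Lean document; each statement's English description precedes it below -/
import Mathlib

section
/- For every complex number z and every complex q with |q| < 1, the q-exponential series E_q(z) = ∑_{n=0}^∞ (q^{n(n-1)/2}/(q;q)_n) z^n converges and equals the infinite product (-z;q)_∞ = ∏_{k=0}^∞ (1 + z q^k). -/
/-- The finite q-shifted factorial `(a;q)_n = ∏_{k=0}^{n-1} (1 - a q^k)`. -/
noncomputable def qPoch (a q : ℂ) (n : ℕ) : ℂ := ∏ k ∈ Finset.range n, (1 - a * q ^ k)

/-- The infinite q-shifted factorial `(a;q)_∞ = ∏_{k=0}^∞ (1 - a q^k)`. -/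
noncomputable def qPochInf (a q : ℂ) : ℂ := ∏' k : ℕ, (1 - a * q ^ k)

/-!
Comparing coefficients gives `E_q(z) = (1 + z) E_q(z q)`. Iterating this `n` times extracts the
partial product `(-z;q)_n` and leaves the factor `E_q(z q^n)`, which tends to `E_q(0) = 1` since
`E_q` is continuous at `0`.
-/

open Filter Topology

section PowerSeries

theorem summable_of_succ_eq_mul_of_tendsto_zero {R : Type*} [NormedRing R] [CompleteSpace R]
    {u r : ℕ → R} (hu : ∀ n, u (n + 1) = u n * r n) (hr : Tendsto r atTop (𝓝 0)) :
    Summable u := by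
  have r_small : ∀ᶠ n in atTop, ‖r n‖ < 1 / 2 := hr.norm.eventually_lt_const (by simp)
  refine summable_of_ratio_norm_eventually_le one_half_lt_one ?_
  filter_upwards [r_small] with n hn
  calc ‖u (n + 1)‖ ≤ ‖u n‖ * ‖r n‖ := hu n ▸ norm_mul_le _ _
    _ ≤ ‖u n‖ * (1 / 2) := by gcongr
    _ = 1 / 2 * ‖u n‖ := mul_comm _ _

theorem continuousOn_tsum_mul_pow_closedBall {R : Type*} [NormedRing R] [NormOneClass R]
    [CompleteSpace R] {c : ℕ → R} (hc : Summable fun n => ‖c n‖) :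
    ContinuousOn (fun z => ∑' n, c n * z ^ n) (Metric.closedBall 0 1) := by
  refine continuousOn_tsum (fun n => by fun_prop) hc fun n z hz => ?_
  have norm_pow_le_one : ‖z ^ n‖ ≤ 1 :=
    (norm_pow_le z n).trans (pow_le_one₀ (norm_nonneg z) (mem_closedBall_zero_iff.mp hz))
  exact (norm_mul_le _ _).trans (mul_le_of_le_one_right (norm_nonneg _) norm_pow_le_one)

end PowerSeries

section QPochhammer

variable {q : ℂ}

theorem qPoch_succ (a q : ℂ) (n : ℕ) : qPoch a q (n + 1) = qPoch a q n * (1 - a * q ^ n) :=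
  Finset.prod_range_succ _ _

theorem tendsto_qPoch (hq : ‖q‖ < 1) (a : ℂ) :
    Tendsto (qPoch a q) atTop (𝓝 (qPochInf a q)) := by
  have summable_norm : Summable fun k : ℕ => ‖-(a * q ^ k)‖ :=
    ((summable_geometric_of_norm_lt_one hq).mul_left a).neg.norm
  have multipliable : Multipliable fun k : ℕ => 1 - a * q ^ k := by
    simpa only [sub_eq_add_neg] using multipliable_one_add_of_summable summable_norm
  exact multipliable.hasProd.tendsto_prod_nat

theorem eq_qPoch_mul_of_eq_one_sub_mul {F : ℂ → ℂ} (hF : ∀ a, F a = (1 - a) * F (a * q))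
    (a : ℂ) (n : ℕ) : F a = qPoch a q n * F (a * q ^ n) := by
  induction n with
  | zero => simp [qPoch]
  | succ n ih => rw [ih, hF (a * q ^ n), qPoch_succ, mul_assoc a, ← pow_succ, mul_assoc]

theorem eq_qPochInf_mul_of_eq_one_sub_mul {F : ℂ → ℂ} (hq : ‖q‖ < 1)
    (hF : ∀ a, F a = (1 - a) * F (a * q)) (hF₀ : ContinuousAt F 0) (a : ℂ) :
    F a = qPochInf a q * F 0 := by
  have arg_tendsto : Tendsto (fun n : ℕ => a * q ^ n) atTop (𝓝 0) := by
    simpa only [mul_zero] using (tendsto_pow_atTop_nhds_zero_of_norm_lt_one hq).const_mul a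
  have rhs_tendsto : Tendsto (fun n => qPoch a q n * F (a * q ^ n)) atTop
      (𝓝 (qPochInf a q * F 0)) :=
    (tendsto_qPoch hq a).mul (hF₀.tendsto.comp arg_tendsto)
  simp only [← eq_qPoch_mul_of_eq_one_sub_mul hF] at rhs_tendsto
  exact tendsto_nhds_unique tendsto_const_nhds rhs_tendsto

end QPochhammer

section QExponential

/-- The coefficient `q^{n(n-1)/2} / (q;q)_n` of `z^n` in the q-exponential series `E_q(z)`,
with the junk value `0` where `(q;q)_n` vanishes. -/
noncomputable def qExpCoeff (q : ℂ) (n : ℕ) : ℂ := q ^ (n * (n - 1) / 2) / qPoch q q n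

/-- The q-exponential function `E_q(z) = ∑_{n=0}^∞ (q^{n(n-1)/2} / (q;q)_n) z^n`, with the junk
value `0` where the series diverges. -/
noncomputable def qExp (q z : ℂ) : ℂ := ∑' n, qExpCoeff q n * z ^ n

variable {q : ℂ}

theorem qExpCoeff_succ (q : ℂ) (n : ℕ) :
    qExpCoeff q (n + 1) = qExpCoeff q n * (q ^ n / (1 - q ^ (n + 1))) := by
  rw [qExpCoeff, qExpCoeff, Nat.triangle_succ, qPoch_succ, pow_add, ← pow_succ', mul_div_mul_comm]

theorem qExpCoeff_succ_mul_one_sub_pow {n : ℕ} (hq : q ^ (n + 1) ≠ 1) :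
    qExpCoeff q (n + 1) * (1 - q ^ (n + 1)) = qExpCoeff q n * q ^ n := by
  rw [qExpCoeff_succ, mul_assoc, div_mul_cancel₀ _ (sub_ne_zero.mpr hq.symm)]

theorem summable_qExpCoeff_mul_pow (hq : ‖q‖ < 1) (z : ℂ) :
    Summable fun n => qExpCoeff q n * z ^ n := by
  have pow_tendsto := tendsto_pow_atTop_nhds_zero_of_norm_lt_one hq
  have denom_tendsto : Tendsto (fun n : ℕ => 1 - q ^ (n + 1)) atTop (𝓝 1) := by
    simpa using ((tendsto_add_atTop_iff_nat 1).mpr pow_tendsto).const_sub 1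
  have ratio_tendsto : Tendsto (fun n : ℕ => q ^ n / (1 - q ^ (n + 1)) * z) atTop (𝓝 0) := by
    simpa using (pow_tendsto.div denom_tendsto one_ne_zero).mul_const z
  refine summable_of_succ_eq_mul_of_tendsto_zero (fun n => ?_) ratio_tendsto
  rw [qExpCoeff_succ, pow_succ z, mul_mul_mul_comm]

theorem qExp_zero_right (q : ℂ) : qExp q 0 = 1 := by
  rw [qExp, tsum_eq_single 0 fun n hn => by rw [zero_pow hn, mul_zero]]
  simp [qExpCoeff, qPoch]

theorem continuousAt_qExp_zero (hq : ‖q‖ < 1) : ContinuousAt (qExp q) 0 := by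
  have summable_norm_coeff : Summable fun n => ‖qExpCoeff q n‖ := by
    simpa using (summable_qExpCoeff_mul_pow hq 1).norm
  exact (continuousOn_tsum_mul_pow_closedBall summable_norm_coeff).continuousAt
    (Metric.closedBall_mem_nhds 0 one_pos)

theorem qExp_eq_one_add_mul_qExp (hq : ‖q‖ < 1) (z : ℂ) :
    qExp q z = (1 + z) * qExp q (z * q) := by
  have pow_ne_one (n : ℕ) : q ^ (n + 1) ≠ 1 := fun h =>
    hq.ne (Complex.norm_eq_one_of_pow_eq_one h n.succ_ne_zero)
  have coeff_eq (n : ℕ) :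
      qExpCoeff q (n + 1) * z ^ (n + 1) - qExpCoeff q (n + 1) * (z * q) ^ (n + 1) =
        z * (qExpCoeff q n * (z * q) ^ n) := by
    linear_combination z ^ (n + 1) * qExpCoeff_succ_mul_one_sub_pow (pow_ne_one n)
  have summable_z := summable_qExpCoeff_mul_pow hq z
  have summable_zq := summable_qExpCoeff_mul_pow hq (z * q)
  have sub_eq : qExp q z - qExp q (z * q) = z * qExp q (z * q) := by
    simp only [qExp]
    rw [← summable_z.tsum_sub summable_zq, (summable_z.sub summable_zq).tsum_eq_zero_add,
      ← tsum_mul_left]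
    simp only [coeff_eq, pow_zero, sub_self, zero_add]
  linear_combination sub_eq

theorem qExp_eq_qPochInf (hq : ‖q‖ < 1) (z : ℂ) : qExp q z = qPochInf (-z) q := by
  have functional_eq (a : ℂ) : qExp q (-a) = (1 - a) * qExp q (-(a * q)) := by
    rw [qExp_eq_one_add_mul_qExp hq, neg_mul, ← sub_eq_add_neg]
  have continuousAt_zero : ContinuousAt (fun a => qExp q (-a)) 0 :=
    (continuousAt_qExp_zero hq).comp_of_eq continuous_neg.continuousAt neg_zero
  simpa only [neg_neg, neg_zero, qExp_zero_right, mul_one] using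
    eq_qPochInf_mul_of_eq_one_sub_mul hq functional_eq continuousAt_zero (-z)

end QExponential

/-- For `|q| < 1` and all complex `z`, the q-exponential series
`E_q(z) = ∑_{n=0}^∞ (q^{n(n-1)/2}/(q;q)_n) z^n` converges to `(-z;q)_∞`. -/
theorem q_exponential_Eq (q z : ℂ) (hq : ‖q‖ < 1) :
    HasSum (fun n : ℕ => q ^ (n * (n - 1) / 2) / qPoch q q n * z ^ n)
      (qPochInf (-z) q) := by
  rw [← qExp_eq_qPochInf hq]
  exact (summable_qExpCoeff_mul_pow hq z).hasSum
end

section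
/- (Quintuple product identity) For all complex numbers q and z with |q| < 1 and z ≠ 0, ∑_{n=-∞}^{∞} (-1)^n q^{n(3n-1)/2} z^{3n} (1 + z q^n) = (q;q)_∞ (-z;q)_∞ (-q/z;q)_∞ (qz²;q²)_∞ (q/z²;q²)_∞. -/
/-! Write `θ(q, x) = ∑ q ^ (j (j - 1) / 2) x ^ j` over `j : ℤ`. By the Jacobi triple product, the
right-hand side times `(q²;q²)_∞` is `θ(q, z) θ(q², -q z²)`. Multiplying the two series, the
coefficient of `z ^ N` is `q ^ (N (N - 1) / 2) θ(q⁶, -q ^ (4 - 2 N))`, and the quasi-periodicity of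
`θ` in `x` reduces it to `N ∈ {0, 1, 2}`: the triple product evaluates it as `(q²;q²)_∞` for `N = 0`
and `N = 1`, and as `0` for `N = 2` because `θ(q⁶, -1)` has the factor `1 - 1`.
-/

open Filter Finset Topology

/-- The triangular number `j (j - 1) / 2` of an integer `j`, the exponent of the theta series. -/
def triangular (j : ℤ) : ℤ := j * (j - 1) / 2

lemma two_mul_triangular (j : ℤ) : 2 * triangular j = j * (j - 1) :=
  Int.two_mul_ediv_two_of_even (Int.even_mul_pred_self j)

lemma triangular_natCast (n : ℕ) : triangular n = n.choose 2 := by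
  have h := two_mul_triangular n
  have h' : 2 * ((n.choose 2 : ℕ) : ℤ) = n * (n - 1) := by
    have := Nat.cast_choose_two ℚ n
    field_simp at this
    rw [mul_comm]
    exact_mod_cast this
  lia

lemma triangular_add (m n : ℤ) :
    triangular (m + n) = triangular m + triangular n + m * n := by
  linarith [two_mul_triangular m, two_mul_triangular n, two_mul_triangular (m + n)]

lemma triangular_add_one (n : ℤ) : triangular (n + 1) = triangular n + n := by
  linarith [two_mul_triangular n, two_mul_triangular (n + 1)]

lemma triangular_neg (n : ℤ) : triangular (-n) = triangular n + n := by
  linarith [two_mul_triangular n, two_mul_triangular (-n)]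

section Finite

variable {R : Type*} [CommRing R]

/-- The finite q-shifted factorial `(a;q)_n`. -/
def qPochhammer (a q : R) (n : ℕ) : R := ∏ k ∈ range n, (1 - a * q ^ k)

lemma qPochhammer_zero (a q : R) : qPochhammer a q 0 = 1 := by
  simp [qPochhammer]

lemma qPochhammer_succ (a q : R) (n : ℕ) :
    qPochhammer a q (n + 1) = qPochhammer a q n * (1 - a * q ^ n) :=
  prod_range_succ _ n

lemma qPochhammer_succ' (a q : R) (n : ℕ) :
    qPochhammer a q (n + 1) = (1 - a) * qPochhammer (a * q) q n := by
  simp only [qPochhammer, prod_range_succ', pow_succ', mul_assoc, pow_zero, mul_one, mul_comm]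

lemma qPochhammer_add (a q : R) (m n : ℕ) :
    qPochhammer a q (m + n) = qPochhammer a q m * qPochhammer (a * q ^ m) q n := by
  simp only [qPochhammer, prod_range_add, pow_add, mul_assoc]

/-- The Gaussian binomial coefficient, defined by its Pascal recursion so that it makes sense even
where the factorials `(q;q)_k` vanish. -/
def qBinomial (q : R) : ℕ → ℕ → R
  | _, 0 => 1
  | 0, _ + 1 => 0
  | n + 1, k + 1 => qBinomial q n k + q ^ (k + 1) * qBinomial q n (k + 1)

lemma qBinomial_zero_right (q : R) (n : ℕ) : qBinomial q n 0 = 1 := by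
  simp only [qBinomial]

lemma qBinomial_eq_zero_of_lt (q : R) {n k : ℕ} (h : n < k) : qBinomial q n k = 0 := by
  induction n generalizing k with
  | zero => obtain ⟨k, rfl⟩ := Nat.exists_eq_succ_of_ne_zero h.ne'; rfl
  | succ n ih =>
    obtain ⟨k, rfl⟩ := Nat.exists_eq_succ_of_ne_zero (Nat.ne_zero_of_lt h)
    simp only [qBinomial, ih (show n < k by lia), ih (show n < k + 1 by lia), mul_zero, add_zero]

lemma qBinomial_mul_qPochhammer_mul_qPochhammer (q : R) (k m : ℕ) :
    qBinomial q (k + m) k * (qPochhammer q q k * qPochhammer q q m) = qPochhammer q q (k + m) := by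
  induction k generalizing m with
  | zero => simp [qBinomial_zero_right, qPochhammer_zero]
  | succ k ihk =>
    induction m with
    | zero =>
      have h := ihk 0
      rw [add_zero, qPochhammer_zero] at h ⊢
      rw [qBinomial, qBinomial_eq_zero_of_lt q k.lt_succ_self, qPochhammer_succ]
      linear_combination (1 - q * q ^ k) * h
    | succ m ihm =>
      have h := ihk (m + 1)
      rw [show k + 1 + m = k + (m + 1) by ring] at ihm
      rw [show k + 1 + (m + 1) = k + (m + 1) + 1 by ring, qBinomial, qPochhammer_succ q q (k + _)]
      rw [qPochhammer_succ q q k] at ihm ⊢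
      rw [qPochhammer_succ q q m] at h ⊢
      linear_combination (1 - q * q ^ k) * h + q ^ (k + 1) * (1 - q * q ^ m) * ihm

/-- The q-binomial theorem. -/
lemma qPochhammer_neg_eq_sum_qBinomial (q x : R) (n : ℕ) :
    qPochhammer (-x) q n = ∑ j ∈ range (n + 1), qBinomial q n j * q ^ j.choose 2 * x ^ j := by
  induction n generalizing x with
  | zero => simp [qPochhammer_zero, qBinomial_zero_right]
  | succ n ih =>
    set f : ℕ → R := fun j ↦ qBinomial q n j * q ^ j.choose 2 * (x * q) ^ j
    have pascal (j : ℕ) : qBinomial q (n + 1) (j + 1) * q ^ (j + 1).choose 2 * x ^ (j + 1) =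
        x * f j + f (j + 1) := by
      simp only [f, qBinomial, Nat.choose_succ_succ' j 1, Nat.choose_one_right]
      ring
    have shift : ∑ j ∈ range (n + 1), f (j + 1) + 1 = ∑ j ∈ range (n + 1), f j := by
      have h : f (n + 1) = 0 := by simp [f, qBinomial_eq_zero_of_lt q n.lt_succ_self]
      simpa [f, h, qBinomial_zero_right, sum_range_succ] using (sum_range_succ' f (n + 1)).symm
    rw [qPochhammer_succ', neg_mul, ih, sum_range_succ' _ (n + 1)]
    simp only [pascal, sum_add_distrib, ← mul_sum, qBinomial_zero_right,
      Nat.choose_zero_succ, pow_zero]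
    linear_combination -shift

end Finite

section FiniteTripleProduct

variable {K : Type*} [Field K] {q x : K}

lemma qPochhammer_mul_zpow_neg (hq : q ≠ 0) (hx : x ≠ 0) (n : ℕ) :
    qPochhammer (x * q ^ (-n : ℤ)) q n =
      (-x) ^ n * q ^ (-triangular (n + 1)) * qPochhammer (q / x) q n := by
  induction n with
  | zero => simp [qPochhammer_zero, triangular]
  | succ n ih =>
    have shift : x * q ^ (-(n + 1 : ℕ) : ℤ) * q = x * q ^ (-n : ℤ) := by
      rw [mul_assoc, ← zpow_add_one₀ hq]
      push_cast
      ring_nf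
    have exponent : -triangular ((n + 1 : ℕ) + 1) = -triangular (n + 1) + -(n + 1 : ℕ) := by
      rw [triangular_add_one]
      push_cast
      ring
    rw [qPochhammer_succ', shift, ih, qPochhammer_succ, exponent, zpow_add₀ hq,
      zpow_neg q (n + 1 : ℕ), zpow_natCast]
    field_simp
    ring

lemma qPochhammer_mul_qPochhammer_eq_sum (hq : q ≠ 0) (hx : x ≠ 0) (n : ℕ) :
    qPochhammer (-x) q n * qPochhammer (-(q / x)) q n =
      ∑ j ∈ Icc (-n : ℤ) n, qBinomial q (2 * n) (n + j).toNat * (q ^ triangular j * x ^ j) := by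
  have exponent (i : ℕ) :
      triangular (i - n) = triangular (n + 1) + -n * i + (i.choose 2 : ℕ) := by
    rw [sub_eq_add_neg, triangular_add, triangular_neg, triangular_add_one,
      triangular_natCast i]
    ring
  have term (i : ℕ) : x ^ (-n : ℤ) * q ^ triangular (n + 1) *
      (qBinomial q (2 * n) i * q ^ i.choose 2 * (x * q ^ (-n : ℤ)) ^ i) =
      qBinomial q (2 * n) i * (q ^ triangular (i - n) * x ^ (i - n : ℤ)) := by
    rw [exponent, zpow_add₀ hq, zpow_add₀ hq, zpow_sub₀ hx, zpow_neg x, mul_pow, zpow_mul]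
    simp only [zpow_natCast]
    ring
  have reindex : ∑ i ∈ range (2 * n + 1),
      qBinomial q (2 * n) i * (q ^ triangular (i - n) * x ^ (i - n : ℤ)) =
      ∑ j ∈ Icc (-n : ℤ) n, qBinomial q (2 * n) (n + j).toNat * (q ^ triangular j * x ^ j) := by
    refine sum_nbij' (fun i ↦ (i : ℤ) - n) (fun j ↦ (n + j).toNat) ?_ ?_ ?_ ?_
      fun i _ ↦ by rw [add_sub_cancel, Int.toNat_natCast]
    all_goals
      intro _ h
      simp only [mem_range, mem_Icc] at h ⊢
      lia
  calc
    _ = x ^ (-n : ℤ) * q ^ triangular (n + 1) * qPochhammer (-(x * q ^ (-n : ℤ))) q (2 * n) := by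
      rw [two_mul, qPochhammer_add, ← neg_mul, qPochhammer_mul_zpow_neg hq (neg_ne_zero.mpr hx),
        mul_assoc (-x), ← zpow_natCast q n, ← zpow_add₀ hq]
      simp only [neg_neg, div_neg, neg_add_cancel, zpow_zero, mul_one, zpow_neg, zpow_natCast]
      field_simp
    _ = _ := by
      rw [qPochhammer_neg_eq_sum_qBinomial, mul_sum, sum_congr rfl fun i _ ↦ term i, reindex]

end FiniteTripleProduct

section Rearrangement

lemma hasSum_sum_range_mul_add {M : Type*} [AddCommMonoid M] [TopologicalSpace M] [ContinuousAdd M]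
    [RegularSpace M] {f : ℤ → M} {s : M} (hf : HasSum f s) (d : ℕ) [NeZero d] :
    HasSum (fun m : ℤ ↦ ∑ r ∈ range d, f (d * m + r)) s := by
  have h := ((Int.divModEquiv d).symm.hasSum_iff.mpr hf).prod_fiberwise fun _ ↦ hasSum_fintype _
  simpa only [Function.comp_apply, Int.divModEquiv_symm_apply, Finset.sum_range, mul_comm] using h

lemma exists_hasSum_natCast_hasSum_neg_add_one {G : Type*} [AddCommGroup G] [UniformSpace G]
    [IsUniformAddGroup G] [CompleteSpace G] [T2Space G] {f : ℤ → G} {s : G} (hf : HasSum f s) :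
    ∃ s₁ s₂ : G, HasSum (fun n : ℕ ↦ f n) s₁ ∧ HasSum (fun n : ℕ ↦ f (-(n + 1))) s₂ ∧
      s₁ + s₂ = s := by
  have h₁ := (hf.summable.comp_injective Nat.cast_injective).hasSum
  have h₂ := (hf.summable.comp_injective (i := fun n : ℕ ↦ (-(n + 1) : ℤ))
    fun _ _ h ↦ by simpa using h).hasSum
  exact ⟨_, _, h₁, h₂, (h₁.of_nat_of_neg_add_one h₂).unique hf⟩

/-- The product of `∑ f j t ^ (d j)` and `∑ g j t ^ j`, collected by powers of `t`. -/
lemma hasSum_tsum_mul_sub_mul {R : Type*} [NormedRing R] [CompleteSpace R] {f g : ℤ → R}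
    (hf : Summable fun j ↦ ‖f j‖) (hg : Summable fun j ↦ ‖g j‖) (d : ℤ) :
    HasSum (fun N : ℤ ↦ ∑' j : ℤ, f j * g (N - d * j)) ((∑' j, f j) * ∑' j, g j) := by
  have hfg := hf.of_norm.hasSum.mul hg.of_norm.hasSum (summable_mul_of_summable_norm hf hg)
  have h := ((Equiv.prodComm ℤ ℤ).trans
    (.prodShear (.refl ℤ) fun j ↦ .subRight (d * j))).hasSum_iff.mpr hfg
  exact h.prod_fiberwise fun N ↦ (h.summable.prod_factor N).hasSum

end Rearrangement

section Analytic

variable {𝕜 : Type*} [NormedField 𝕜]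

/-- The infinite q-shifted factorial `(a;q)_∞` over a normed field, of which `qPochInf` is the
case `ℂ`. -/
noncomputable def qPochhammerInf (a q : 𝕜) : 𝕜 := ∏' k : ℕ, (1 - a * q ^ k)

lemma qPochhammerInf_zero_left (q : 𝕜) : qPochhammerInf 0 q = 1 := by
  simp [qPochhammerInf]

lemma qPochhammerInf_zero_right (a : 𝕜) : qPochhammerInf a 0 = 1 - a := by
  rw [qPochhammerInf, tprod_eq_mulSingle 0 fun k hk ↦ by simp [hk], pow_zero, mul_one]

lemma qPochhammerInf_one_left (q : 𝕜) : qPochhammerInf 1 q = 0 :=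
  tprod_of_exists_eq_zero ⟨0, by simp⟩

variable {q : 𝕜}

lemma summable_norm_mul_pow (a : 𝕜) (hq : ‖q‖ < 1) : Summable fun k : ℕ ↦ ‖a * q ^ k‖ := by
  simpa using (summable_geometric_of_lt_one (norm_nonneg q) hq).mul_left ‖a‖

lemma summable_norm_pow_choose_two_mul_pow (hq : ‖q‖ < 1) (a : 𝕜) :
    Summable fun n : ℕ ↦ ‖q ^ n.choose 2 * a ^ n‖ := by
  have ratio : Tendsto (fun n : ℕ ↦ ‖a * q ^ n‖) atTop (𝓝 0) :=
    (summable_norm_mul_pow a hq).tendsto_atTop_zero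
  refine summable_of_ratio_norm_eventually_le (r := 1 / 2) (by norm_num) ?_
  filter_upwards [ratio.eventually_le_const (by norm_num : (0 : ℝ) < 1 / 2)] with n hn
  have succ_term : q ^ (n + 1).choose 2 * a ^ (n + 1) = a * q ^ n * (q ^ n.choose 2 * a ^ n) := by
    rw [Nat.choose_succ_succ' n 1, Nat.choose_one_right]
    ring
  rw [succ_term, norm_norm, norm_norm, norm_mul]
  gcongr

lemma norm_pow_lt_one (hq : ‖q‖ < 1) {n : ℕ} (hn : n ≠ 0) : ‖q ^ n‖ < 1 := by
  simpa only [norm_pow] using pow_lt_one₀ (norm_nonneg q) hq hn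

lemma one_sub_mul_pow_ne_zero (hq : ‖q‖ < 1) (k : ℕ) : 1 - q * q ^ k ≠ 0 := by
  rw [← pow_succ', sub_ne_zero]
  intro h
  simpa [← h] using norm_pow_lt_one hq k.succ_ne_zero

lemma qPochhammer_self_ne_zero (hq : ‖q‖ < 1) (n : ℕ) : qPochhammer q q n ≠ 0 :=
  prod_ne_zero_iff.mpr fun k _ ↦ one_sub_mul_pow_ne_zero hq k

lemma qBinomial_eq_mul_inv_mul_inv (hq : ‖q‖ < 1) {n k : ℕ} (h : k ≤ n) :
    qBinomial q n k = qPochhammer q q n * (qPochhammer q q k)⁻¹ * (qPochhammer q q (n - k))⁻¹ := by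
  have := qPochhammer_self_ne_zero hq k
  have := qPochhammer_self_ne_zero hq (n - k)
  obtain ⟨m, rfl⟩ := Nat.exists_eq_add_of_le h
  rw [← qBinomial_mul_qPochhammer_mul_qPochhammer]
  simp only [add_tsub_cancel_left] at *
  field_simp

/-- The theta series `∑ q ^ (j (j - 1) / 2) x ^ j` over all integers `j`, in the normalisation
of the Jacobi triple product. -/
noncomputable def qTheta (q x : 𝕜) : 𝕜 := ∑' j : ℤ, q ^ triangular j * x ^ j

lemma summable_norm_qTheta (hq : ‖q‖ < 1) (x : 𝕜) :
    Summable fun j : ℤ ↦ ‖q ^ triangular j * x ^ j‖ := by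
  refine .of_nat_of_neg_add_one ?_ ?_
  · simpa only [triangular_natCast, zpow_natCast] using summable_norm_pow_choose_two_mul_pow hq x
  · refine ((summable_nat_add_iff 1).mpr
      (summable_norm_pow_choose_two_mul_pow hq (q * x⁻¹))).congr fun n ↦ ?_
    have exponent : triangular (-(n + 1)) = ((n + 1).choose 2 + (n + 1) : ℕ) := by
      rw [triangular_neg]
      exact_mod_cast congrArg (· + ((n + 1 : ℕ) : ℤ)) (triangular_natCast (n + 1))
    rw [exponent, zpow_natCast, zpow_neg, ← inv_zpow, mul_pow, ← Nat.cast_add_one, zpow_natCast]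
    congr 1
    ring

lemma qTheta_mul_zpow {x : 𝕜} (hq : q ≠ 0) (hx : x ≠ 0) (m : ℤ) :
    qTheta q (x * q ^ m) = q ^ (-triangular m) * x ^ (-m) * qTheta q x := by
  rw [qTheta, qTheta, ← (Equiv.addRight m).tsum_eq fun j ↦ q ^ triangular j * x ^ j,
    ← tsum_mul_left]
  refine tsum_congr fun j ↦ ?_
  simp only [Equiv.coe_addRight, triangular_add, mul_zpow, ← zpow_mul, zpow_add₀ hq,
    zpow_add₀ hx, zpow_neg, mul_comm m j]
  field_simp

/-- The coefficient of `z ^ N` in `θ(q, z) θ(q², -q z²)`. -/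
noncomputable def quintupleCoeff (q : 𝕜) (N : ℤ) : 𝕜 :=
  q ^ triangular N * qTheta (q ^ 6) (-q ^ (4 - 2 * N))

lemma quintupleCoeff_three_mul_add (hq : q ≠ 0) (m r : ℤ) :
    quintupleCoeff q (3 * m + r) =
      (-1) ^ m * q ^ (m * (3 * m - 1) / 2 + r * m) * quintupleCoeff q r := by
  have shift : -q ^ (4 - 2 * (3 * m + r)) = -q ^ (4 - 2 * r) * (q ^ 6) ^ (-m) := by
    rw [neg_mul, ← zpow_natCast q 6, ← zpow_mul, ← zpow_add₀ hq]
    congr 2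
    push_cast
    ring
  have exponent : triangular (3 * m + r) + 6 * -triangular (-m) + (4 - 2 * r) * m =
      m * (3 * m - 1) / 2 + r * m + triangular r := by
    have pentagonal : 2 * (m * (3 * m - 1) / 2) = m * (3 * m - 1) :=
      Int.two_mul_ediv_two_of_even (by grind)
    linarith [two_mul_triangular (3 * m + r), two_mul_triangular (-m), two_mul_triangular r]
  have sign : (-q ^ (4 - 2 * r)) ^ m = (-1) ^ m * q ^ ((4 - 2 * r) * m) := by
    rw [neg_eq_neg_one_mul, mul_zpow, zpow_mul]
  have pow_six : (q ^ 6) ^ (-triangular (-m)) = q ^ (6 * -triangular (-m)) := by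
    rw [zpow_mul, zpow_ofNat]
  rw [quintupleCoeff, quintupleCoeff, shift, qTheta_mul_zpow (pow_ne_zero 6 hq)
    (neg_ne_zero.mpr (zpow_ne_zero _ hq)), neg_neg, sign, pow_six]
  calc
    _ = (-1) ^ m * q ^ (triangular (3 * m + r) + 6 * -triangular (-m) + (4 - 2 * r) * m) *
        qTheta (q ^ 6) (-q ^ (4 - 2 * r)) := by
      rw [zpow_add₀ hq, zpow_add₀ hq]
      ring
    _ = _ := by
      rw [exponent, zpow_add₀ hq]
      ring

lemma hasSum_quintuple_zero (z : 𝕜) :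
    HasSum (fun n : ℤ ↦ (-1) ^ n * 0 ^ (n * (3 * n - 1) / 2) * z ^ (3 * n) * (1 + z * 0 ^ n))
      (1 + z) := by
  convert hasSum_single (0 : ℤ) fun n hn ↦ ?_ using 1
  · simp
  · have : pentagonal n ≠ 0 := pentagonal_injective.ne hn
    rw [← natCast_pentagonal, zpow_natCast, zero_pow this]
    simp only [mul_zero, zero_mul]

variable [CompleteSpace 𝕜]

lemma multipliable_one_sub_mul_pow (a : 𝕜) (hq : ‖q‖ < 1) :
    Multipliable fun k : ℕ ↦ 1 - a * q ^ k := by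
  simpa only [sub_eq_add_neg] using multipliable_one_add_of_summable
    (f := fun k ↦ -(a * q ^ k)) (by simpa only [norm_neg] using summable_norm_mul_pow a hq)

lemma tendsto_qPochhammer (a : 𝕜) (hq : ‖q‖ < 1) :
    Tendsto (qPochhammer a q) atTop (𝓝 (qPochhammerInf a q)) :=
  (multipliable_one_sub_mul_pow a hq).tendsto_prod_tprod_nat

lemma qPochhammerInf_self_ne_zero (hq : ‖q‖ < 1) : qPochhammerInf q q ≠ 0 := by
  simpa only [qPochhammerInf, sub_eq_add_neg] using tprod_one_add_ne_zero_of_summable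
    (f := fun k ↦ -(q * q ^ k))
    (by simpa only [sub_eq_add_neg] using one_sub_mul_pow_ne_zero hq)
    (by simpa only [norm_neg] using summable_norm_mul_pow q hq)

lemma prod_range_qPochhammerInf (a : 𝕜) (hq : ‖q‖ < 1) (d : ℕ) [NeZero d] :
    ∏ i ∈ range d, qPochhammerInf (a * q ^ i) (q ^ d) = qPochhammerInf a q := by
  have h := ((Nat.divModEquiv d).symm.hasProd_iff.mpr
    (multipliable_one_sub_mul_pow a hq).hasProd).prod_fiberwise fun _ ↦ hasProd_fintype _
  refine HasProd.unique (hasProd_prod fun i _ ↦ (multipliable_one_sub_mul_pow _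
    (norm_pow_lt_one hq (NeZero.ne d))).hasProd) ?_
  rw [qPochhammerInf]
  convert h using 2 with k
  rw [Finset.prod_range]
  refine prod_congr rfl fun i _ ↦ ?_
  simp only [Function.comp_apply, Nat.divModEquiv_symm_apply]
  ring

lemma exists_norm_qBinomial_le (hq : ‖q‖ < 1) : ∃ C : ℝ, ∀ n k : ℕ, ‖qBinomial q n k‖ ≤ C := by
  have lim := tendsto_qPochhammer q hq
  obtain ⟨A, hA⟩ := (Metric.isBounded_range_of_tendsto _ lim).exists_norm_le
  obtain ⟨B, hB⟩ := (Metric.isBounded_range_of_tendsto _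
    (lim.inv₀ (qPochhammerInf_self_ne_zero hq))).exists_norm_le
  simp only [Set.forall_mem_range] at hA hB
  have hA₀ : 0 ≤ A := (norm_nonneg _).trans (hA 0)
  have hB₀ : 0 ≤ B := (norm_nonneg _).trans (hB 0)
  refine ⟨A * B * B, fun n k ↦ ?_⟩
  obtain h | h := le_or_gt k n
  · rw [qBinomial_eq_mul_inv_mul_inv hq h, norm_mul, norm_mul]
    gcongr
    exacts [hA _, hB _, hB _]
  · rw [qBinomial_eq_zero_of_lt q h, norm_zero]
    positivity

lemma tendsto_qBinomial_central (hq : ‖q‖ < 1) (j : ℤ) :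
    Tendsto (fun n : ℕ ↦ qBinomial q (2 * n) (n + j).toNat) atTop (𝓝 (qPochhammerInf q q)⁻¹) := by
  have hP := qPochhammerInf_self_ne_zero hq
  have lim {u : ℕ → ℕ} (hu : ∀ n : ℕ, n - j.natAbs ≤ u n) :
      Tendsto (fun n ↦ qPochhammer q q (u n)) atTop (𝓝 (qPochhammerInf q q)) :=
    (tendsto_qPochhammer q hq).comp
      (tendsto_atTop_mono hu (tendsto_sub_atTop_nat _))
  have h := ((lim (u := fun n ↦ 2 * n) (by lia)).mul
    ((lim (u := fun n ↦ (n + j).toNat) (by lia)).inv₀ hP)).mul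
    ((lim (u := fun n ↦ 2 * n - (n + j).toNat) (by lia)).inv₀ hP)
  rw [mul_inv_cancel₀ hP, one_mul] at h
  refine h.congr' ?_
  filter_upwards [eventually_ge_atTop j.natAbs] with n hn
  rw [qBinomial_eq_mul_inv_mul_inv hq (by lia)]

/-- The Jacobi triple product identity. -/
lemma qTheta_eq_qPochhammerInf (hq₀ : q ≠ 0) (hq : ‖q‖ < 1) {x : 𝕜} (hx : x ≠ 0) :
    qTheta q x = qPochhammerInf q q * qPochhammerInf (-x) q * qPochhammerInf (-(q / x)) q := by
  obtain ⟨C, hC⟩ := exists_norm_qBinomial_le hq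
  let F (n : ℕ) : ℤ → 𝕜 := (Icc (-n : ℤ) n : Set ℤ).indicator
    fun j ↦ qBinomial q (2 * n) (n + j).toNat * (q ^ triangular j * x ^ j)
  have F_eq (n : ℕ) : ∑' j, F n j = qPochhammer (-x) q n * qPochhammer (-(q / x)) q n := by
    rw [qPochhammer_mul_qPochhammer_eq_sum hq₀ hx, sum_eq_tsum_indicator]
  have termwise (j : ℤ) :
      Tendsto (F · j) atTop (𝓝 ((qPochhammerInf q q)⁻¹ * (q ^ triangular j * x ^ j))) := by
    refine ((tendsto_qBinomial_central hq j).mul_const _).congr' ?_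
    filter_upwards [eventually_ge_atTop j.natAbs] with n hn
    have hj : j ∈ (Icc (-n : ℤ) n : Set ℤ) := by
      rw [coe_Icc, Set.mem_Icc]
      lia
    simp only [F, Set.indicator_of_mem hj]
  have dominated (n : ℕ) (j : ℤ) : ‖F n j‖ ≤ C * ‖q ^ triangular j * x ^ j‖ := by
    refine (norm_indicator_le_norm_self _ _).trans ?_
    rw [norm_mul]
    gcongr
    exact hC _ _
  have lim_sum := tendsto_tsum_of_dominated_convergence ((summable_norm_qTheta hq x).mul_left C)
    termwise (.of_forall dominated)
  have lim_prod := (tendsto_qPochhammer (-x) hq).mul (tendsto_qPochhammer (-(q / x)) hq)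
  rw [tsum_mul_left, funext F_eq] at lim_sum
  rw [mul_assoc, ← tendsto_nhds_unique lim_sum lim_prod, qTheta,
    mul_inv_cancel_left₀ (qPochhammerInf_self_ne_zero hq)]

lemma quintupleCoeff_zero (hq₀ : q ≠ 0) (hq : ‖q‖ < 1) :
    quintupleCoeff q 0 = qPochhammerInf (q ^ 2) (q ^ 2) := by
  have trisection := prod_range_qPochhammerInf (q ^ 2) (norm_pow_lt_one hq two_ne_zero) 3
  have quotient : -(q ^ 6 / -q ^ 4) = q ^ 2 := by field_simp
  rw [quintupleCoeff, mul_zero, sub_zero, zpow_ofNat,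
    qTheta_eq_qPochhammerInf (pow_ne_zero 6 hq₀) (norm_pow_lt_one hq (by norm_num))
      (neg_ne_zero.mpr (pow_ne_zero 4 hq₀)), quotient, ← trisection]
  simp only [triangular, prod_range_succ, range_zero, prod_empty, zero_mul,
    EuclideanDomain.zero_div, zpow_zero, neg_neg, one_mul, pow_zero, mul_one, pow_one]
  ring_nf

lemma quintupleCoeff_one (hq₀ : q ≠ 0) (hq : ‖q‖ < 1) :
    quintupleCoeff q 1 = qPochhammerInf (q ^ 2) (q ^ 2) := by
  have trisection := prod_range_qPochhammerInf (q ^ 2) (norm_pow_lt_one hq two_ne_zero) 3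
  have quotient : -(q ^ 6 / -q ^ 2) = q ^ 4 := by field_simp
  rw [quintupleCoeff, mul_one, show (4 - 2 : ℤ) = 2 from rfl, zpow_ofNat,
    qTheta_eq_qPochhammerInf (pow_ne_zero 6 hq₀) (norm_pow_lt_one hq (by norm_num))
      (neg_ne_zero.mpr (pow_ne_zero 2 hq₀)), quotient, ← trisection]
  simp only [triangular, prod_range_succ, range_zero, prod_empty, sub_self, mul_zero,
    EuclideanDomain.zero_div, zpow_zero, neg_neg, one_mul, pow_zero, mul_one, pow_one]
  ring_nf

lemma quintupleCoeff_two (hq₀ : q ≠ 0) (hq : ‖q‖ < 1) : quintupleCoeff q 2 = 0 := by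
  rw [quintupleCoeff, show (4 - 2 * 2 : ℤ) = 0 from rfl, zpow_zero,
    qTheta_eq_qPochhammerInf (pow_ne_zero 6 hq₀) (norm_pow_lt_one hq (by norm_num))
      (neg_ne_zero.mpr one_ne_zero), neg_neg, qPochhammerInf_one_left]
  simp only [mul_zero, zero_mul]

lemma hasSum_quintupleCoeff (hq₀ : q ≠ 0) (hq : ‖q‖ < 1) {z : 𝕜} (hz : z ≠ 0) :
    HasSum (fun N : ℤ ↦ quintupleCoeff q N * z ^ N)
      (qTheta (q ^ 2) (-(q * z ^ 2)) * qTheta q z) := by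
  have exponent (N j : ℤ) : 2 * triangular j + j + triangular (N - 2 * j) =
      triangular N + 6 * triangular j + (4 - 2 * N) * j := by
    linarith [two_mul_triangular j, two_mul_triangular N, two_mul_triangular (N - 2 * j)]
  have term (N j : ℤ) : (q ^ 2) ^ triangular j * (-(q * z ^ 2)) ^ j *
      (q ^ triangular (N - 2 * j) * z ^ (N - 2 * j)) =
      q ^ triangular N * z ^ N * ((q ^ 6) ^ triangular j * (-q ^ (4 - 2 * N)) ^ j) := by
    calc
      _ = (-1) ^ j * q ^ (2 * triangular j + j + triangular (N - 2 * j)) * z ^ N := by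
        rw [neg_eq_neg_one_mul, mul_zpow, mul_zpow, zpow_add₀ hq₀, zpow_add₀ hq₀, zpow_mul,
          zpow_sub₀ hz, zpow_mul z, zpow_ofNat, zpow_ofNat]
        field_simp
      _ = _ := by
        rw [exponent, neg_eq_neg_one_mul (q ^ (4 - 2 * N)), mul_zpow, zpow_add₀ hq₀,
          zpow_add₀ hq₀, zpow_mul, zpow_mul, zpow_ofNat]
        ring
  rw [qTheta, qTheta]
  convert hasSum_tsum_mul_sub_mul
    (summable_norm_qTheta (norm_pow_lt_one hq two_ne_zero) (-(q * z ^ 2)))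
    (summable_norm_qTheta hq z) 2 using 2 with N
  rw [tsum_congr (term N), tsum_mul_left, quintupleCoeff, qTheta]
  ring

lemma qTheta_mul_qTheta (hq₀ : q ≠ 0) (hq : ‖q‖ < 1) {z : 𝕜} (hz : z ≠ 0) :
    qTheta (q ^ 2) (-(q * z ^ 2)) * qTheta q z = qPochhammerInf q q * qPochhammerInf (-z) q *
      qPochhammerInf (-(q / z)) q * qPochhammerInf (q * z ^ 2) (q ^ 2) *
      qPochhammerInf (q / z ^ 2) (q ^ 2) * qPochhammerInf (q ^ 2) (q ^ 2) := by
  have quotient : -(q ^ 2 / -(q * z ^ 2)) = q / z ^ 2 := by field_simp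
  rw [qTheta_eq_qPochhammerInf hq₀ hq hz, qTheta_eq_qPochhammerInf (pow_ne_zero 2 hq₀)
    (norm_pow_lt_one hq two_ne_zero) (neg_ne_zero.mpr (mul_ne_zero hq₀ (pow_ne_zero 2 hz))),
    quotient, neg_neg]
  ring

theorem quintuple_product_general (hq : ‖q‖ < 1) {z : 𝕜} (hz : z ≠ 0) :
    HasSum (fun n : ℤ ↦ (-1) ^ n * q ^ (n * (3 * n - 1) / 2) * z ^ (3 * n) * (1 + z * q ^ n))
      (qPochhammerInf q q * qPochhammerInf (-z) q * qPochhammerInf (-(q / z)) q *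
        qPochhammerInf (q * z ^ 2) (q ^ 2) * qPochhammerInf (q / z ^ 2) (q ^ 2)) := by
  obtain rfl | hq₀ := eq_or_ne q 0
  · simpa [qPochhammerInf_zero_left, qPochhammerInf_zero_right] using hasSum_quintuple_zero z
  · rw [← hasSum_mul_right_iff (qPochhammerInf_self_ne_zero (norm_pow_lt_one hq two_ne_zero)),
      ← qTheta_mul_qTheta hq₀ hq hz]
    convert hasSum_sum_range_mul_add (hasSum_quintupleCoeff hq₀ hq hz) 3 using 2 with n
    simp only [sum_range_succ, range_zero, sum_empty, Nat.cast_ofNat, Nat.cast_zero,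
      Nat.cast_one, quintupleCoeff_three_mul_add hq₀, quintupleCoeff_zero hq₀ hq,
      quintupleCoeff_one hq₀ hq, quintupleCoeff_two hq₀ hq]
    simp only [zero_mul, add_zero, one_mul, mul_zero, zpow_one, zpow_add₀ hq₀, zpow_add₀ hz]
    ring

end Analytic

/-- The quintuple product identity: for `|q| < 1` and `z ≠ 0`,
`∑_{n=-∞}^∞ (-1)^n q^{n(3n-1)/2} z^{3n} (1 + z q^n)
  = (q;q)_∞ (-z;q)_∞ (-q/z;q)_∞ (qz²;q²)_∞ (q/z²;q²)_∞`. -/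
theorem quintuple_product (q z : ℂ) (hq : ‖q‖ < 1) (hz : z ≠ 0) :
    ∃ S₁ S₂ : ℂ,
      HasSum (fun n : ℕ =>
        (-1 : ℂ) ^ (n : ℤ) * q ^ ((n : ℤ) * (3 * (n : ℤ) - 1) / 2) *
          z ^ (3 * (n : ℤ)) * (1 + z * q ^ (n : ℤ))) S₁ ∧
      HasSum (fun n : ℕ =>
        (-1 : ℂ) ^ (-(n + 1) : ℤ) * q ^ ((-(n + 1) : ℤ) * (3 * (-(n + 1) : ℤ) - 1) / 2) *
          z ^ (3 * (-(n + 1) : ℤ)) * (1 + z * q ^ (-(n + 1) : ℤ))) S₂ ∧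
      S₁ + S₂ =
        qPochInf q q * qPochInf (-z) q * qPochInf (-(q / z)) q *
          qPochInf (q * z ^ 2) (q ^ 2) * qPochInf (q / z ^ 2) (q ^ 2) := by
  exact exists_hasSum_natCast_hasSum_neg_add_one (quintuple_product_general hq hz)
end

section
/- (q-Chu–Vandermonde summation) Let q, a, c be complex numbers and n a nonnegative integer such that all denominator factors below are nonzero (in particular (c;q)_k ≠ 0 and (q;q)_k ≠ 0 for 0 ≤ k ≤ n). Then ∑_{k=0}^{n} ((a;q)_k (q^{-n};q)_k / ((q;q)_k (c;q)_k)) q^k = ((c/a;q)_n / (c;q)_n) a^n. -/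
/-!
Replacing `b` by `bq` in the terms of `₂φ₁(a, b; c; q, z)` changes the series by a multiple of
`₂φ₁(aq, bq; cq; q, z)`. For `b = q^{-(n+1)}` both `bq`-series stop at `k = n`, which gives an
induction on `n` with `a` and `c` varying. Homogenizing `a^n (c/a;q)_n` to `∏_{k<n} (a - c q^k)`
avoids dividing by `a` and makes `(a, c) ↦ (aq, cq)` act on it by the factor `q^n`.
-/

section Factorial

variable (a b q : ℂ) (n : ℕ)

theorem qPoch_zero : qPoch a q 0 = 1 :=
  Finset.prod_range_zero _

theorem qPoch_succ_right : qPoch a q (n + 1) = qPoch a q n * (1 - a * q ^ n) :=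
  Finset.prod_range_succ _ _

theorem qPoch_succ_left : qPoch a q (n + 1) = (1 - a) * qPoch (a * q) q n := by
  simp only [qPoch, Finset.prod_range_succ', pow_succ', pow_zero, mul_one, mul_assoc, mul_comm]

theorem qPoch_succ_contiguous :
    qPoch b q (n + 1) =
      qPoch (b * q) q (n + 1) - b * (1 - q * q ^ n) * qPoch (b * q) q n := by
  rw [qPoch_succ_left b, qPoch_succ_right (b * q)]
  ring

variable {a b q n}

theorem qPoch_succ_eq_zero (h : b * q ^ n = 1) : qPoch b q (n + 1) = 0 := by
  rw [qPoch_succ_right, h, sub_self, mul_zero]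

theorem qPoch_div_mul_pow (ha : a ≠ 0) (c : ℂ) :
    qPoch (c / a) q n * a ^ n = ∏ k ∈ Finset.range n, (a - c * q ^ k) := by
  calc
    _ = ∏ k ∈ Finset.range n, (1 - c / a * q ^ k) * a := by
      rw [qPoch, ← Finset.prod_mul_pow_card, Finset.card_range]
    _ = _ := Finset.prod_congr rfl fun k _ => by field_simp

end Factorial

theorem prod_mul_sub_mul_mul_pow {R : Type*} [CommRing R] (a c q : R) (n : ℕ) :
    ∏ k ∈ Finset.range n, (a * q - c * q * q ^ k) =
      q ^ n * ∏ k ∈ Finset.range n, (a - c * q ^ k) := by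
  calc
    _ = ∏ k ∈ Finset.range n, q * (a - c * q ^ k) :=
      Finset.prod_congr rfl fun k _ => by ring
    _ = _ := by rw [← Finset.pow_card_mul_prod, Finset.card_range]

/-- The `k`-th term of the basic hypergeometric series `₂φ₁(a, b; c; q, z)`, kept at general
argument `z` so that contiguous relations in `a`, `b`, `c` can be stated termwise. It is the junk
value `0` when `(q;q)_k (c;q)_k = 0`. -/
noncomputable def twoPhiOneTerm (a b c q z : ℂ) (k : ℕ) : ℂ :=
  qPoch a q k * qPoch b q k / (qPoch q q k * qPoch c q k) * z ^ k

theorem twoPhiOneTerm_succ_contiguous (a b c z : ℂ) {q : ℂ} {k : ℕ} (hk : 1 - q * q ^ k ≠ 0) :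
    twoPhiOneTerm a b c q z (k + 1) =
      twoPhiOneTerm a (b * q) c q z (k + 1) -
        b * z * (1 - a) / (1 - c) * twoPhiOneTerm (a * q) (b * q) (c * q) q z k := by
  calc
    _ = twoPhiOneTerm a (b * q) c q z (k + 1) -
          qPoch a q (k + 1) * (b * (1 - q * q ^ k) * qPoch (b * q) q k) /
            (qPoch q q (k + 1) * qPoch c q (k + 1)) * z ^ (k + 1) := by
      rw [twoPhiOneTerm, twoPhiOneTerm, qPoch_succ_contiguous b, mul_sub, sub_div, sub_mul]
    _ = _ := by
      rw [twoPhiOneTerm.eq_def (a * q), qPoch_succ_left a, qPoch_succ_left c, qPoch_succ_right q,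
        pow_succ]
      field_simp

theorem sum_twoPhiOneTerm_contiguous (a b c z : ℂ) {q : ℂ} {n : ℕ} (hq : qPoch q q n ≠ 0) :
    ∑ k ∈ Finset.range (n + 1), twoPhiOneTerm a b c q z k =
      ∑ k ∈ Finset.range (n + 1), twoPhiOneTerm a (b * q) c q z k -
        b * z * (1 - a) / (1 - c) *
          ∑ k ∈ Finset.range n, twoPhiOneTerm (a * q) (b * q) (c * q) q z k := by
  have hfactor : ∀ k ∈ Finset.range n, 1 - q * q ^ k ≠ 0 := Finset.prod_ne_zero_iff.1 hq
  have hzero : twoPhiOneTerm a b c q z 0 = twoPhiOneTerm a (b * q) c q z 0 := by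
    simp only [twoPhiOneTerm, qPoch_zero]
  rw [Finset.sum_range_succ', Finset.sum_range_succ', hzero, Finset.mul_sum, add_sub_right_comm,
    ← Finset.sum_sub_distrib]
  congr 1
  exact Finset.sum_congr rfl fun k hk => twoPhiOneTerm_succ_contiguous a b c z (hfactor k hk)

theorem sum_twoPhiOneTerm_of_mul_pow_eq_one {b q : ℂ} {n : ℕ} (a c : ℂ) (hb : b * q ^ n = 1)
    (hq : qPoch q q n ≠ 0) (hc : qPoch c q n ≠ 0) :
    ∑ k ∈ Finset.range (n + 1), twoPhiOneTerm a b c q q k =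
      (∏ k ∈ Finset.range n, (a - c * q ^ k)) / qPoch c q n := by
  induction n generalizing a b c with
  | zero => simp [twoPhiOneTerm, qPoch_zero]
  | succ n ih =>
    have hbq : b * q * q ^ n = 1 := by rw [mul_assoc, ← pow_succ', hb]
    have hqn : qPoch q q n ≠ 0 := left_ne_zero_of_mul (qPoch_succ_right q q n ▸ hq)
    obtain ⟨hcn, hlast⟩ := mul_ne_zero_iff.1 (qPoch_succ_right c q n ▸ hc)
    obtain ⟨hfirst, hcq⟩ := mul_ne_zero_iff.1 (qPoch_succ_left c q n ▸ hc)
    have hvanish : twoPhiOneTerm a (b * q) c q q (n + 1) = 0 := by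
      simp only [twoPhiOneTerm, qPoch_succ_eq_zero hbq, mul_zero, zero_div, zero_mul]
    set P := ∏ k ∈ Finset.range n, (a - c * q ^ k)
    calc
      _ = P / qPoch c q n -
            b * q * (1 - a) / (1 - c) * (q ^ n * P / qPoch (c * q) q n) := by
        rw [sum_twoPhiOneTerm_contiguous a b c q hq, Finset.sum_range_succ _ (n + 1), hvanish,
          add_zero, ih a c hbq hqn hcn, ih (a * q) (c * q) hbq hqn hcq,
          prod_mul_sub_mul_mul_pow]
      _ = P / qPoch c q n - (b * q * q ^ n) * (1 - a) * P / ((1 - c) * qPoch (c * q) q n) := by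
        field_simp
      _ = P / qPoch c q n - (1 - a) * P / (qPoch c q n * (1 - c * q ^ n)) := by
        rw [hbq, one_mul, ← qPoch_succ_left, qPoch_succ_right]
      _ = P * (a - c * q ^ n) / (qPoch c q n * (1 - c * q ^ n)) := by
        field_simp
        ring
      _ = _ := by rw [Finset.prod_range_succ, qPoch_succ_right]

/-- The q-Chu–Vandermonde summation:
`∑_{k=0}^n ((a;q)_k (q^{-n};q)_k/((q;q)_k (c;q)_k)) q^k = ((c/a;q)_n/(c;q)_n) a^n`,
assuming nonzero denominator factors. -/
theorem q_chu_vandermonde (q a c : ℂ) (n : ℕ) (hq : q ≠ 0) (ha : a ≠ 0)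
    (hden : ∀ k ≤ n, qPoch q q k ≠ 0 ∧ qPoch c q k ≠ 0) :
    ∑ k ∈ Finset.range (n + 1),
        qPoch a q k * qPoch (q ^ (-(n : ℤ))) q k / (qPoch q q k * qPoch c q k) * q ^ k =
      qPoch (c / a) q n / qPoch c q n * a ^ n := by
  obtain ⟨hqn, hcn⟩ := hden n le_rfl
  have hb : q ^ (-(n : ℤ)) * q ^ n = 1 := by
    rw [zpow_neg, zpow_natCast, inv_mul_cancel₀ (pow_ne_zero n hq)]
  rw [div_mul_eq_mul_div, qPoch_div_mul_pow ha]
  exact sum_twoPhiOneTerm_of_mul_pow_eq_one a c hb hqn hcn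
end
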